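/- Let g_T and g_D be probability densities with respect to a σ-finite measure μ on a measurable space Ω, let β := ∫_Ω min(g_T, g_D) dμ, assume β < 1, and define g'(x) := max(0, g_T(x) − g_D(x))/(1 − β). On the product space Ω × [0,1] × Ω equipped with the product of the measure with density g_D, the uniform distribution on [0,1], and the measure with density g', define the output Y(τ̂, ε, τ') := τ̂ if ε < min(1, g_T(τ̂)/g_D(τ̂)) (ratio interpreted as 0 when g_D(τ̂) = 0) and Y(τ̂, ε, τ') := τ' otherwise. Then the law of Y is the probability measure with density g_T with respect to μ; equivalently, for every measurable set A ⊆ Ω, P(Y ∈ A) = ∫_A g_T dμ. -/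

import Mathlib

open MeasureTheory

/-!
Proposing from the density `g_D` and accepting with probability `min(1, g_T / g_D)` produces
accepted points with density `g_D * min(1, g_T / g_D) = min(g_T, g_D)`, of total mass `β`. The
remaining mass `1 - β` is redistributed according to `g'`, which contributes the density
`(1 - β) g' = max(0, g_T - g_D) = g_T - min(g_T, g_D)`. The two contributions add up to `g_T`.
-/

section AcceptProb

variable {Ω : Type*} {gT gD : Ω → ℝ} {x : Ω}

/-- The probability `min(1, g_T / g_D)` of accepting a proposal drawn from `g_D`. Where `g_D`
vanishes the ratio is `0` by the convention `x / 0 = 0`. -/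
noncomputable def acceptProb (gT gD : Ω → ℝ) (x : Ω) : ℝ :=
  min 1 (gT x / gD x)

theorem acceptProb_mem_Icc (hT : 0 ≤ gT x) (hD : 0 ≤ gD x) :
    acceptProb gT gD x ∈ Set.Icc 0 1 :=
  ⟨le_min zero_le_one (div_nonneg hT hD), min_le_left _ _⟩

theorem mul_acceptProb (hT : 0 ≤ gT x) (hD : 0 ≤ gD x) :
    gD x * acceptProb gT gD x = min (gT x) (gD x) := by
  rcases hD.eq_or_lt with h | h
  · rw [← h, zero_mul, min_eq_right hT]
  · rw [acceptProb, mul_min_of_nonneg _ _ h.le, mul_one, mul_div_cancel₀ _ h.ne', min_comm]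

end AcceptProb

section AcceptOrResample

variable {Ω : Type*} [MeasurableSpace Ω]

/-- The output of one accept/resample step on `ω = (proposal, uniform variable, resample)`: the
proposal is accepted with probability `a`, otherwise the resample is returned. -/
noncomputable def acceptOrResample (a : Ω → ℝ) (ω : Ω × ℝ × Ω) : Ω :=
  if ω.2.1 < a ω.1 then ω.1 else ω.2.2

theorem measurable_acceptOrResample {a : Ω → ℝ} (ha : Measurable a) :
    Measurable (acceptOrResample a) :=
  Measurable.ite (measurableSet_lt (by fun_prop) (by fun_prop)) (by fun_prop) (by fun_prop)

theorem volume_restrict_Icc_zero_one_Iio {t : ℝ} (ht : t ≤ 1) :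
    volume.restrict (Set.Icc (0 : ℝ) 1) (Set.Iio t) = ENNReal.ofReal t := by
  have h_inter : Set.Iio t ∩ Set.Icc 0 1 = Set.Ico 0 t := by
    ext; simp only [Set.mem_inter_iff, Set.mem_Iio, Set.mem_Icc, Set.mem_Ico]; grind
  rw [Measure.restrict_apply measurableSet_Iio, h_inter, Real.volume_Ico, sub_zero]

theorem volume_restrict_Icc_zero_one_Ici {t : ℝ} (ht : 0 ≤ t) :
    volume.restrict (Set.Icc (0 : ℝ) 1) (Set.Ici t) = ENNReal.ofReal (1 - t) := by
  have h_inter : Set.Ici t ∩ Set.Icc 0 1 = Set.Icc t 1 := by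
    ext; simp only [Set.mem_inter_iff, Set.mem_Ici, Set.mem_Icc]; grind
  rw [Measure.restrict_apply measurableSet_Ici, h_inter, Real.volume_Icc]

theorem uniform_prod_preimage_acceptOrResample (ρ : Measure Ω) [IsProbabilityMeasure ρ] {a : Ω → ℝ}
    {x : Ω} (hx : a x ∈ Set.Icc 0 1) {A : Set Ω} (hA : MeasurableSet A) :
    ((volume.restrict (Set.Icc (0 : ℝ) 1)).prod ρ)
        (Prod.mk x ⁻¹' (acceptOrResample a ⁻¹' A)) =
      A.indicator (fun y ↦ ENNReal.ofReal (a y)) x + ENNReal.ofReal (1 - a x) * ρ A := by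
  have h_slice : Prod.mk x ⁻¹' (acceptOrResample a ⁻¹' A) =
      Set.Iio (a x) ×ˢ {_y : Ω | x ∈ A} ∪ Set.Ici (a x) ×ˢ A := by
    ext ⟨e, y⟩
    by_cases h : e < a x <;> simp [acceptOrResample, h, ← not_lt]
  have h_disjoint : Disjoint (Set.Iio (a x) ×ˢ {_y : Ω | x ∈ A}) (Set.Ici (a x) ×ˢ A) :=
    Set.disjoint_prod.2 (Or.inl (Set.Iio_disjoint_Ici le_rfl))
  rw [h_slice, measure_union h_disjoint (measurableSet_Ici.prod hA), Measure.prod_prod,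
    Measure.prod_prod, volume_restrict_Icc_zero_one_Iio hx.2,
    volume_restrict_Icc_zero_one_Ici hx.1]
  by_cases hxA : x ∈ A <;> simp [hxA]

theorem map_acceptOrResample (ν ρ : Measure Ω) [IsProbabilityMeasure ρ] {a : Ω → ℝ}
    (ha : Measurable a) (ha01 : ∀ x, a x ∈ Set.Icc 0 1) :
    (ν.prod ((volume.restrict (Set.Icc (0 : ℝ) 1)).prod ρ)).map (acceptOrResample a) =
      ν.withDensity (fun x ↦ ENNReal.ofReal (a x)) +
        (∫⁻ x, ENNReal.ofReal (1 - a x) ∂ν) • ρ := by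
  ext A hA
  have hY := measurable_acceptOrResample ha
  calc
    _ = ∫⁻ x, (A.indicator (fun y ↦ ENNReal.ofReal (a y)) x +
          ENNReal.ofReal (1 - a x) * ρ A) ∂ν := by
      simp_rw [Measure.map_apply hY hA, Measure.prod_apply (hY hA),
        uniform_prod_preimage_acceptOrResample ρ (ha01 _) hA]
    _ = ∫⁻ x in A, ENNReal.ofReal (a x) ∂ν + (∫⁻ x, ENNReal.ofReal (1 - a x) ∂ν) * ρ A := by
      rw [lintegral_add_left (ha.ennreal_ofReal.indicator hA), lintegral_indicator hA,
        lintegral_mul_const _ (by fun_prop)]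
    _ = _ := by
      rw [Measure.add_apply, withDensity_apply _ hA, Measure.smul_apply, smul_eq_mul]

end AcceptOrResample

section SpeculativeDecoding

variable {Ω : Type*} [MeasurableSpace Ω] {μ : Measure Ω} {g gT gD : Ω → ℝ}

/-- `g` is a probability density with respect to `μ`. A non-integrable function has Bochner integral
`0`, so the normalization includes integrability. -/
structure IsProbDensity (μ : Measure Ω) (g : Ω → ℝ) : Prop where
  measurable : Measurable g
  nonneg : ∀ x, 0 ≤ g x
  integral_eq_one : ∫ x, g x ∂μ = 1

theorem IsProbDensity.integrable (hg : IsProbDensity μ g) : Integrable g μ :=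
  integrable_of_integral_eq_one hg.integral_eq_one

theorem IsProbDensity.withDensity_apply (hg : IsProbDensity μ g) {A : Set Ω}
    (hA : MeasurableSet A) :
    μ.withDensity (fun x ↦ ENNReal.ofReal (g x)) A = ENNReal.ofReal (∫ x in A, g x ∂μ) := by
  rw [MeasureTheory.withDensity_apply _ hA,
    ofReal_integral_eq_lintegral_ofReal hg.integrable.restrict (ae_of_all _ hg.nonneg)]

theorem IsProbDensity.isProbabilityMeasure_withDensity (hg : IsProbDensity μ g) :
    IsProbabilityMeasure (μ.withDensity fun x ↦ ENNReal.ofReal (g x)) where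
  measure_univ := by
    rw [hg.withDensity_apply .univ, setIntegral_univ, hg.integral_eq_one, ENNReal.ofReal_one]

theorem IsProbDensity.integrable_min (hT : IsProbDensity μ gT) (hD : IsProbDensity μ gD) :
    Integrable (fun x ↦ min (gT x) (gD x)) μ :=
  hT.integrable.inf hD.integrable

theorem IsProbDensity.integral_sub_min (hT : IsProbDensity μ gT) (hD : IsProbDensity μ gD) :
    ∫ x, (gT x - min (gT x) (gD x)) ∂μ = 1 - ∫ x, min (gT x) (gD x) ∂μ := by
  rw [integral_sub hT.integrable (hT.integrable_min hD), hT.integral_eq_one]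

theorem measurable_acceptProb (hT : Measurable gT) (hD : Measurable gD) :
    Measurable (acceptProb gT gD) :=
  measurable_const.min (hT.div hD)

theorem withDensity_acceptProb (hT : Measurable gT) (hD : Measurable gD)
    (hT0 : ∀ x, 0 ≤ gT x) (hD0 : ∀ x, 0 ≤ gD x) :
    (μ.withDensity fun x ↦ ENNReal.ofReal (gD x)).withDensity
        (fun x ↦ ENNReal.ofReal (acceptProb gT gD x)) =
      μ.withDensity fun x ↦ ENNReal.ofReal (min (gT x) (gD x)) := by
  rw [← withDensity_mul μ hD.ennreal_ofReal (measurable_acceptProb hT hD).ennreal_ofReal]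
  congr 1 with x
  rw [Pi.mul_apply, ← ENNReal.ofReal_mul (hD0 x), mul_acceptProb (hT0 x) (hD0 x)]

theorem lintegral_one_sub_acceptProb (hT : IsProbDensity μ gT) (hD : IsProbDensity μ gD) :
    ∫⁻ x, ENNReal.ofReal (1 - acceptProb gT gD x)
        ∂(μ.withDensity fun x ↦ ENNReal.ofReal (gD x)) =
      ENNReal.ofReal (1 - ∫ x, min (gT x) (gD x) ∂μ) := by
  have h_acc := measurable_acceptProb hT.measurable hD.measurable
  have h_rej : ∀ x, gD x * (1 - acceptProb gT gD x) = gD x - min (gD x) (gT x) := fun x ↦ by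
    rw [mul_sub, mul_one, mul_acceptProb (hT.nonneg x) (hD.nonneg x), min_comm]
  have h_int : Integrable (fun x ↦ gD x - min (gD x) (gT x)) μ :=
    hD.integrable.sub (hD.integrable_min hT)
  rw [lintegral_withDensity_eq_lintegral_mul _ hD.measurable.ennreal_ofReal (by fun_prop)]
  simp_rw [Pi.mul_apply, ← ENNReal.ofReal_mul (hD.nonneg _), h_rej]
  rw [← ofReal_integral_eq_lintegral_ofReal h_int
    (ae_of_all _ fun x ↦ sub_nonneg.2 (min_le_left _ _)), hD.integral_sub_min hT]
  simp_rw [min_comm (gD _)]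

/-- The density `g' = max(0, g_T - g_D) / (1 - β)`, with `β = ∫ min(g_T, g_D) ∂μ`, from which a
replacement is drawn after a rejection. -/
noncomputable def adjustedDensity (μ : Measure Ω) (gT gD : Ω → ℝ) (x : Ω) : ℝ :=
  max 0 (gT x - gD x) / (1 - ∫ y, min (gT y) (gD y) ∂μ)

theorem adjustedDensity_eq_sub_min_div (x : Ω) :
    adjustedDensity μ gT gD x =
      (gT x - min (gT x) (gD x)) / (1 - ∫ y, min (gT y) (gD y) ∂μ) := by
  rw [adjustedDensity, ← max_sub_sub_left, sub_self]

theorem IsProbDensity.adjustedDensity (hT : IsProbDensity μ gT) (hD : IsProbDensity μ gD)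
    (hβ : ∫ x, min (gT x) (gD x) ∂μ < 1) : IsProbDensity μ (adjustedDensity μ gT gD) where
  measurable := (measurable_const.max (hT.measurable.sub hD.measurable)).div_const _
  nonneg _ := div_nonneg (le_max_left _ _) (sub_pos.2 hβ).le
  integral_eq_one := by
    simp_rw [adjustedDensity_eq_sub_min_div]
    rw [integral_div, hT.integral_sub_min hD, div_self (sub_pos.2 hβ).ne']

theorem smul_withDensity_adjustedDensity (hβ : ∫ x, min (gT x) (gD x) ∂μ < 1) :
    ENNReal.ofReal (1 - ∫ x, min (gT x) (gD x) ∂μ) •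
        μ.withDensity (fun x ↦ ENNReal.ofReal (adjustedDensity μ gT gD x)) =
      μ.withDensity fun x ↦ ENNReal.ofReal (gT x - min (gT x) (gD x)) := by
  rw [← withDensity_smul' _ _ ENNReal.ofReal_ne_top]
  congr 1 with x
  rw [Pi.smul_apply, smul_eq_mul, ← ENNReal.ofReal_mul (sub_pos.2 hβ).le,
    adjustedDensity_eq_sub_min_div, mul_div_cancel₀ _ (sub_pos.2 hβ).ne']

theorem withDensity_min_add_withDensity_sub_min (hT : Measurable gT) (hD : Measurable gD)
    (hT0 : ∀ x, 0 ≤ gT x) (hD0 : ∀ x, 0 ≤ gD x) :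
    μ.withDensity (fun x ↦ ENNReal.ofReal (min (gT x) (gD x))) +
        μ.withDensity (fun x ↦ ENNReal.ofReal (gT x - min (gT x) (gD x))) =
      μ.withDensity fun x ↦ ENNReal.ofReal (gT x) := by
  rw [← withDensity_add_left (hT.min hD).ennreal_ofReal]
  congr 1 with x
  rw [Pi.add_apply, ← ENNReal.ofReal_add (le_min (hT0 x) (hD0 x))
    (sub_nonneg.2 (min_le_left _ _)), add_sub_cancel]

theorem speculative_decoding_output_law_general (hT : IsProbDensity μ gT)
    (hD : IsProbDensity μ gD) (hβ : ∫ x, min (gT x) (gD x) ∂μ < 1) :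
    ((μ.withDensity fun x ↦ ENNReal.ofReal (gD x)).prod
        ((volume.restrict (Set.Icc (0 : ℝ) 1)).prod
          (μ.withDensity fun x ↦ ENNReal.ofReal (adjustedDensity μ gT gD x)))).map
        (acceptOrResample (acceptProb gT gD)) =
      μ.withDensity fun x ↦ ENNReal.ofReal (gT x) := by
  have := (hT.adjustedDensity hD hβ).isProbabilityMeasure_withDensity
  rw [map_acceptOrResample _ _ (measurable_acceptProb hT.measurable hD.measurable)
      fun x ↦ acceptProb_mem_Icc (hT.nonneg x) (hD.nonneg x),
    withDensity_acceptProb hT.measurable hD.measurable hT.nonneg hD.nonneg,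
    lintegral_one_sub_acceptProb hT hD, smul_withDensity_adjustedDensity hβ,
    withDensity_min_add_withDensity_sub_min hT.measurable hD.measurable hT.nonneg hD.nonneg]

end SpeculativeDecoding

/-- One-step speculative decoding: propose `τ̂ ~ g_D`, accept with probability
`min(1, g_T(τ̂)/g_D(τ̂))`, otherwise resample `τ'` from the adjusted density `g'`.
The output is distributed according to the target density `g_T`. -/
theorem speculative_decoding_output_law
    {Ω : Type*} [MeasurableSpace Ω] (μ : Measure Ω) [SigmaFinite μ]
    (gT gD : Ω → ℝ) (hTm : Measurable gT) (hDm : Measurable gD)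
    (hT0 : ∀ x, 0 ≤ gT x) (hD0 : ∀ x, 0 ≤ gD x)
    (hT1 : ∫ x, gT x ∂μ = 1) (hD1 : ∫ x, gD x ∂μ = 1)
    (β : ℝ) (hβ : β = ∫ x, min (gT x) (gD x) ∂μ) (hβ1 : β < 1)
    (g' : Ω → ℝ) (hg' : ∀ x, g' x = max 0 (gT x - gD x) / (1 - β))
    (A : Set Ω) (hA : MeasurableSet A) :
    ((μ.withDensity fun x => ENNReal.ofReal (gD x)).prod
        ((volume.restrict (Set.Icc (0 : ℝ) 1)).prod
          (μ.withDensity fun x => ENNReal.ofReal (g' x))))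
      {ω : Ω × ℝ × Ω |
        (if ω.2.1 < min 1 (gT ω.1 / gD ω.1) then ω.1 else ω.2.2) ∈ A}
      = ENNReal.ofReal (∫ x in A, gT x ∂μ) := by
  subst hβ
  obtain rfl : g' = adjustedDensity μ gT gD := funext hg'
  have hT : IsProbDensity μ gT := ⟨hTm, hT0, hT1⟩
  rw [← hT.withDensity_apply hA, ← speculative_decoding_output_law_general hT ⟨hDm, hD0, hD1⟩ hβ1,
    Measure.map_apply (measurable_acceptOrResample (measurable_acceptProb hTm hDm)) hA]
  rfl
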